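/- Let α ∈ Ω be defined by α_n = 1 if and only if n + 1 is prime, and let β ∈ Ω be the string 1000⋯ (β₀ = 1 and β_n = 0 for all n ≥ 1). Then the pair (α, β) is admissible and non-null, i.e., h(Ω_{(α,β)}) > 0. -/

import Mathlib

/-!
Since no two consecutive integers beyond `2, 3` are both prime, the word `011` occurs in `α` only
at its very beginning, so every proper shift of `α` starting with `0` lies below `α`.
Since there are infinitely many primes, no shift of `α` is `1000⋯ = β`, and `β` is the least string
that starts with `1`; this gives admissibility (`admissible_primes`).

The same two observations show that a string with infinitely many `1`s and without the word `11`
lies in `Ω_{(α,β,-)}` (`mem_addrMinus_primes`): its shifts starting with `0` start with `00` or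
`010`, hence lie below `α = 011⋯`. Strings whose odd-indexed bits vanish have no word `11`, and
their even-indexed bits can be prescribed freely on a finite range, so there are at least
`2 ^ (n / 2 + 1)` prefixes of length `n + 1` (`two_pow_le_ncard_prefixes`), and the growth rate is
at least `(ln 2) / 2`.
-/

open Filter Set

/-- The space of infinite binary strings. -/
abbrev Omega := ℕ → Bool

/-- Numerical value of a bit. -/
def b2r (b : Bool) : ℝ := if b then 1 else 0

/-- The projection map `π_x(ω) = (1-x) ∑ ω_k x^k`. -/
noncomputable def proj (x : ℝ) (ω : Omega) : ℝ := (1 - x) * ∑' k : ℕ, b2r (ω k) * x ^ k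

/-- The shift map. -/
def shift (ω : Omega) : Omega := fun n => ω (n + 1)

/-- Strict lexicographic order on binary strings. -/
def lexLt (σ ω : Omega) : Prop := ∃ k : ℕ, (∀ i < k, σ i = ω i) ∧ σ k = false ∧ ω k = true

/-- Lexicographic order on binary strings. -/
def lexLe (σ ω : Omega) : Prop := σ = ω ∨ lexLt σ ω

/-- An admissible pair of binary strings. -/
def admissible (α β : Omega) : Prop :=
  α 0 = false ∧ α 1 = true ∧ β 0 = true ∧ β 1 = false ∧
  (∀ n : ℕ, ¬ (lexLt α (shift^[n] α) ∧ lexLe (shift^[n] α) β)) ∧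
  (∀ n : ℕ, ¬ (lexLe α (shift^[n] β) ∧ lexLt (shift^[n] β) β))

/-- The address space `Ω_{(α,β,-)}`. -/
def addrMinus (α β : Omega) : Set Omega :=
  {ω | ∀ n : ℕ, ¬ (lexLt α (shift^[n] ω) ∧ lexLe (shift^[n] ω) β)}

/-- The address space `Ω_{(α,β,+)}`. -/
def addrPlus (α β : Omega) : Set Omega :=
  {ω | ∀ n : ℕ, ¬ (lexLe α (shift^[n] ω) ∧ lexLt (shift^[n] ω) β)}

/-- The address space `Ω_{(α,β)}`. -/
def addr (α β : Omega) : Set Omega := addrMinus α β ∪ addrPlus α β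

/-- The exponential growth rate `h(Γ) = limsup (1/n) ln |Γ_n|`, where `Γ_n` is the set of
length-`(n+1)` prefixes of members of `Γ`. -/
noncomputable def growthRate (Γ : Set Omega) : ℝ :=
  Filter.limsup
    (fun n : ℕ => Real.log ((fun ω : Omega => fun i : Fin (n + 1) => ω i.val) '' Γ).ncard / n)
    Filter.atTop

/-- The uniform overlapping function `f_{(a,p,-)}`. -/
noncomputable def fMinus (a p : ℝ) : ℝ → ℝ := fun x => if x ≤ p then a * x else a * x + (1 - a)

/-- The uniform overlapping function `f_{(a,p,+)}`. -/
noncomputable def fPlus (a p : ℝ) : ℝ → ℝ := fun x => if x < p then a * x else a * x + (1 - a)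

/-- The itinerary map `τ_{(a,p,-)}`: the `n`-th bit is `1` iff `f^n(x) ∈ I₁ = (p,1]`. -/
noncomputable def itinMinus (a p x : ℝ) : Omega := fun n => decide (p < (fMinus a p)^[n] x)

/-- The itinerary map `τ_{(a,p,+)}`: the `n`-th bit is `1` iff `f^n(x) ∈ I₁ = [p,1]`. -/
noncomputable def itinPlus (a p x : ℝ) : Omega := fun n => decide (p ≤ (fPlus a p)^[n] x)

theorem shift_iterate_apply (ω : Omega) (n k : ℕ) : (shift^[n] ω) k = ω (n + k) := by
  induction n generalizing ω with
  | zero => simp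
  | succ n ih =>
    rw [Function.iterate_succ_apply, ih]
    simp only [shift]
    congr 1
    omega

theorem lexLt_asymm {σ ω : Omega} (h : lexLt σ ω) (h' : lexLt ω σ) : False := by
  obtain ⟨k, hk, h0, h1⟩ := h
  obtain ⟨l, hl, h0', h1'⟩ := h'
  rcases lt_trichotomy k l with h | h | h
  · have := hl k h
    simp_all
  · simp_all
  · have := hk l h
    simp_all

/-- The string `1000⋯` is the least string starting with `1`, so a string below it which starts
with `1` has no other `1`. -/
theorem eq_false_of_lexLe_beta {β ω : Omega} (hβ : ∀ n : ℕ, β n = decide (n = 0))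
    (h0 : ω 0 = true) (h : lexLe ω β) (k : ℕ) (hk : k ≠ 0) : ω k = false := by
  rcases h with rfl | ⟨l, _, hl0, hl1⟩
  · simp [hβ, hk]
  · have : l = 0 := by simpa [hβ] using hl1
    subst this
    simp [h0] at hl0

theorem alpha_head {α : Omega} (hα : ∀ n : ℕ, α n = decide (Nat.Prime (n + 1))) :
    α 0 = false ∧ α 1 = true ∧ α 2 = true := by
  refine ⟨?_, ?_, ?_⟩ <;> rw [hα] <;> norm_num

/-- A string starting with `0`, but not with `011`, lies strictly below `α = 011⋯`. -/
theorem lexLt_alpha {α : Omega} (hα : ∀ n : ℕ, α n = decide (Nat.Prime (n + 1))) {ω : Omega}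
    (h0 : ω 0 = false) (h : ω 1 = false ∨ ω 2 = false) : lexLt ω α := by
  obtain ⟨a0, a1, a2⟩ := alpha_head hα
  cases h1 : ω 1 with
  | false =>
    refine ⟨1, fun i hi => ?_, h1, a1⟩
    interval_cases i
    rw [h0, a0]
  | true =>
    refine ⟨2, fun i hi => ?_, by simpa [h1] using h, a2⟩
    interval_cases i
    · rw [h0, a0]
    · rw [h1, a1]

theorem admissible_primes {α β : Omega} (hα : ∀ n : ℕ, α n = decide (Nat.Prime (n + 1)))
    (hβ : ∀ n : ℕ, β n = decide (n = 0)) : admissible α β := by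
  obtain ⟨a0, a1, a2⟩ := alpha_head hα
  refine ⟨a0, a1, by simp [hβ], by simp [hβ], ?_, ?_⟩
  · rintro n ⟨hlt, hle⟩
    cases hn : α n with
    | true =>
      obtain ⟨p, hp, hpp⟩ := Nat.exists_infinite_primes (n + 2)
      have := eq_false_of_lexLe_beta hβ (by rw [shift_iterate_apply]; exact hn) hle
        (p - 1 - n) (by omega)
      rw [shift_iterate_apply, hα, show n + (p - 1 - n) + 1 = p by omega] at this
      simp [hpp] at this
    | false =>
      rcases Nat.eq_zero_or_pos n with rfl | hpos
      · exact lexLt_asymm hlt hlt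
      · refine lexLt_asymm hlt (lexLt_alpha hα (by rw [shift_iterate_apply]; exact hn) ?_)
        -- One of the consecutive integers `n + 2`, `n + 3` is even and larger than `2`.
        simp only [shift_iterate_apply, hα, decide_eq_false_iff_not]
        by_contra! hc
        rcases hc.1.eq_two_or_odd with h | h <;> rcases hc.2.eq_two_or_odd with h' | h' <;> omega
  · rintro n ⟨hle, hlt⟩
    rcases Nat.eq_zero_or_pos n with rfl | hpos
    · exact lexLt_asymm hlt hlt
    · -- A proper shift of `β` is `000⋯`, which lies below `α`.
      have hz : ∀ k, (shift^[n] β) k = false := fun k => by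
        rw [shift_iterate_apply, hβ]
        simp
        omega
      have hlt' := lexLt_alpha hα (hz 0) (Or.inl (hz 1))
      rcases hle with h | h
      · rw [← h] at hlt'
        exact lexLt_asymm hlt' hlt'
      · exact lexLt_asymm h hlt'

/-- Strings with infinitely many `1`s and without the word `11` belong to the address space. -/
theorem mem_addrMinus_primes {α β : Omega} (hα : ∀ n : ℕ, α n = decide (Nat.Prime (n + 1)))
    (hβ : ∀ n : ℕ, β n = decide (n = 0)) {ω : Omega} (h11 : ∀ n, ω n = false ∨ ω (n + 1) = false)
    (hinf : ∀ n, ∃ m > n, ω m = true) : ω ∈ addrMinus α β := by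
  rintro n ⟨hlt, hle⟩
  cases hn : ω n with
  | true =>
    obtain ⟨m, hm, hmt⟩ := hinf n
    have := eq_false_of_lexLe_beta hβ (by rw [shift_iterate_apply]; exact hn) hle
      (m - n) (by omega)
    rw [shift_iterate_apply, show n + (m - n) = m by omega, hmt] at this
    simp at this
  | false =>
    refine lexLt_asymm hlt (lexLt_alpha hα (by rw [shift_iterate_apply]; exact hn) ?_)
    simpa only [shift_iterate_apply] using h11 (n + 1)

/-- The string `f₀ 0 f₁ 0 ⋯ f_{m-1} 0 1 0 1 0 ⋯`: prescribed even-indexed bits below `2 m`,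
zeros at all odd indices, and a tail with infinitely many `1`s. -/
def spread {m : ℕ} (f : Fin m → Bool) : Omega := fun k =>
  if k % 2 = 0 then (if h : k / 2 < m then f ⟨k / 2, h⟩ else true) else false

theorem spread_mem {α β : Omega} (hα : ∀ n : ℕ, α n = decide (Nat.Prime (n + 1)))
    (hβ : ∀ n : ℕ, β n = decide (n = 0)) {m : ℕ} (f : Fin m → Bool) : spread f ∈ addr α β := by
  refine Or.inl (mem_addrMinus_primes hα hβ (fun n => ?_) (fun n => ?_))
  · rcases Nat.mod_two_eq_zero_or_one n with h | h
    · exact Or.inr (if_neg (by omega))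
    · exact Or.inl (if_neg (by omega))
  · refine ⟨2 * (n + m + 1), by omega, ?_⟩
    rw [spread, if_pos (by omega), dif_neg (by omega)]

theorem two_pow_le_ncard_prefixes {α β : Omega} (hα : ∀ n : ℕ, α n = decide (Nat.Prime (n + 1)))
    (hβ : ∀ n : ℕ, β n = decide (n = 0)) (n : ℕ) :
    2 ^ (n / 2 + 1) ≤
      ((fun ω : Omega => fun i : Fin (n + 1) => ω i.val) '' addr α β).ncard := by
  let g : (Fin (n / 2 + 1) → Bool) → (Fin (n + 1) → Bool) := fun f i => spread f i.val
  have hg : Function.Injective g := by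
    intro f f' h
    funext j
    have := congrFun h ⟨2 * j.val, by omega⟩
    have hj : j.val ≤ n / 2 := by omega
    simpa [g, spread, hj] using this
  have hsub : Set.range g ⊆ (fun ω : Omega => fun i : Fin (n + 1) => ω i.val) '' addr α β := by
    rintro _ ⟨f, rfl⟩
    exact ⟨spread f, spread_mem hα hβ f, rfl⟩
  have hcard : (Set.range g).ncard = 2 ^ (n / 2 + 1) := by
    rw [← Nat.card_coe_set_eq, Nat.card_range_of_injective hg]
    simp
  rw [← hcard]
  exact Set.ncard_le_ncard hsub (Set.toFinite _)

theorem ncard_prefixes_le (Γ : Set Omega) (n : ℕ) :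
    ((fun ω : Omega => fun i : Fin (n + 1) => ω i.val) '' Γ).ncard ≤ 2 ^ (n + 1) := by
  have := Set.ncard_le_ncard (Set.subset_univ
    ((fun ω : Omega => fun i : Fin (n + 1) => ω i.val) '' Γ)) (Set.toFinite _)
  simpa [Set.ncard_univ] using this

/-- An exponential lower bound on the number of prefixes bounds the growth rate from below; the
trivial upper bound `2 ^ (n + 1)` is needed since the `limsup` is taken in `ℝ`. -/
theorem growthRate_pos_of_two_pow_le {Γ : Set Omega}
    (h : ∀ n : ℕ, 2 ^ (n / 2 + 1) ≤
      ((fun ω : Omega => fun i : Fin (n + 1) => ω i.val) '' Γ).ncard) :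
    0 < growthRate Γ := by
  have hlog : 0 < Real.log 2 := Real.log_pos (by norm_num)
  refine lt_of_lt_of_le (half_pos hlog) (Filter.le_limsup_of_frequently_le ?_ ?_)
  · refine Filter.Eventually.frequently ?_
    filter_upwards [Filter.eventually_gt_atTop 0] with n hn
    have hn' : (0 : ℝ) < n := by exact_mod_cast hn
    rw [le_div_iff₀ hn']
    have h2 : (n : ℝ) ≤ 2 * ((n / 2 + 1 : ℕ) : ℝ) := by
      exact_mod_cast (by omega : n ≤ 2 * (n / 2 + 1))
    have h3 := Real.log_le_log (by positivity) (by exact_mod_cast h n :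
      ((2 : ℝ) ^ (n / 2 + 1)) ≤
        (((fun ω : Omega => fun i : Fin (n + 1) => ω i.val) '' Γ).ncard : ℝ))
    rw [Real.log_pow] at h3
    nlinarith
  · refine Filter.isBoundedUnder_of_eventually_le (a := 2 * Real.log 2) ?_
    filter_upwards [Filter.eventually_gt_atTop 0] with n hn
    have hn' : (1 : ℝ) ≤ n := by exact_mod_cast hn
    rw [div_le_iff₀ (by linarith)]
    have hpos : 0 < ((fun ω : Omega => fun i : Fin (n + 1) => ω i.val) '' Γ).ncard :=
      lt_of_lt_of_le (by positivity) (h n)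
    have h3 := Real.log_le_log (by exact_mod_cast hpos) (by exact_mod_cast ncard_prefixes_le Γ n :
      (((fun ω : Omega => fun i : Fin (n + 1) => ω i.val) '' Γ).ncard : ℝ) ≤ (2 : ℝ) ^ (n + 1))
    rw [Real.log_pow] at h3
    push_cast at h3
    nlinarith

/-- The pair (α,β), where α_n = 1 iff n+1 is prime and β = 1000⋯, is admissible and non-null. -/
theorem stmt5 (α β : Omega) (hα : ∀ n : ℕ, α n = decide (Nat.Prime (n + 1)))
    (hβ : ∀ n : ℕ, β n = decide (n = 0)) :
    admissible α β ∧ 0 < growthRate (addr α β) :=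
  ⟨admissible_primes hα hβ, growthRate_pos_of_two_pow_le (two_pow_le_ncard_prefixes hα hβ)⟩
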